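/- For every parameter α = (α_0, …, α_4) ∈ ℂ^5 and every triple (a, b, c) ∈ ℂ^3, there exists a unique formal meromorphic solution (c_n^i) of the A_4^(1) system at t_0 of pole order 1 with residue vector (c_{−1}^0, …, c_{−1}^4) = (−1, −3, 0, 3, 1) and with c_0^0 = a, c_2^3 = b, c_4^2 = c. Moreover every formal meromorphic solution of pole order 1 with this residue vector satisfies c_0^1 = c_0^2 = c_0^3 = 0, c_0^4 = c_0^0, c_1^2 = −α_2/3 and c_2^2 = 0. -/

import Mathlib

/-!
Write the Laurent coefficients with `n ≥ 0` as a sequence `u n = cₙ ∈ ℂ⁵`. With the residue vector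
`ρ = (-1, -3, 0, 3, 1)` fixed, separating the two extreme terms of the convolution turns the
recurrence at order `n ≥ 0` into `(n - B) uₙ = Rₙ`, where `Rₙ` (`lowerRHS`) depends only on
`u₀, …, uₙ₋₁` and `α`, and `B` is a constant `5 × 5` matrix (`linPart`); the orders `n < 0` hold
automatically. The matrix `B` is diagonalizable with eigenvalues `0, 2, 4, -2, -4`, with left
eigenvectors `(1,1,1,1,1)`, `(0,1,3,1,0)`, `(0,0,1,0,0)`, `(-1,0,0,0,1)`, `(-3,1,0,-1,3)`.
So the recurrence determines `uₙ` except at the resonances `n = 0, 2, 4`, where one coordinate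
(`c₀⁰`, `c₂³`, `c₄²`) fixes the remaining freedom: this is `eq_zero_of_linPart`, and it gives
uniqueness.

For existence, `step` solves the linear system in the eigenbasis, and a solution results provided
that `Rₙ` is annihilated by the resonant left eigenvector at `n = 0, 2, 4`. At `n = 0` this is
trivial. At `n = 2` it follows from `u₀ = (a, 0, 0, 0, a)`, which makes `R₂¹ = R₂² = R₂³ = 0`
whatever `u₁` is. At `n = 4` the third component of `R₄` vanishes because `c₀² = c₂² = 0` and because the combination
`c³ - c⁴ + c⁰ - c¹` vanishes at orders `0` and `2`, so all four products in the sum are zero.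
-/

/-- A formal meromorphic solution of the `A₄⁽¹⁾` system
`fᵢ' = fᵢ (fᵢ₊₁ − fᵢ₊₂ + fᵢ₊₃ − fᵢ₊₄) + αᵢ` (indices mod 5) at a point `t₀`,
of pole order `r ≥ 1`: a family of coefficients `c i n` (`i : Fin 5`, `n : ℤ`)
vanishing for `n < -r`, with nonzero leading vector, satisfying the formal
Laurent-series recurrence `n cₙⁱ = Σ_{k=-r}^{n+r-1} cₖⁱ G_{n-k-1}ⁱ + δ_{n,1} αᵢ`
where `Gₙⁱ = cₙ^{i+1} − cₙ^{i+2} + cₙ^{i+3} − cₙ^{i+4}`. -/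
def IsFormalMeromSolA4 (α : Fin 5 → ℂ) (r : ℤ) (c : Fin 5 → ℤ → ℂ) : Prop :=
  1 ≤ r ∧
  (∃ i : Fin 5, c i (-r) ≠ 0) ∧
  (∀ (i : Fin 5) (n : ℤ), n < -r → c i n = 0) ∧
  ∀ (i : Fin 5) (n : ℤ),
    (n : ℂ) * c i n =
      (∑ k ∈ Finset.Icc (-r) (n + r - 1),
        c i k * (c (i + 1) (n - k - 1) - c (i + 2) (n - k - 1) +
          c (i + 3) (n - k - 1) - c (i + 4) (n - k - 1))) +
      (if n = 1 then α i else 0)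

namespace A4Aux

/-- The alternating combination `Gⁱ = vⁱ⁺¹ - vⁱ⁺² + vⁱ⁺³ - vⁱ⁺⁴`. -/
def altG (v : Fin 5 → ℂ) (i : Fin 5) : ℂ := v (i + 1) - v (i + 2) + v (i + 3) - v (i + 4)

/-- The residue vector. -/
def rho : Fin 5 → ℂ := ![-1, -3, 0, 3, 1]

/-- The matrix `B`: the part of the order `n` convolution which is linear in the order `n`
coefficients `v`. -/
def linPart (v : Fin 5 → ℂ) (i : Fin 5) : ℂ := rho i * altG v i + v i * altG rho i

/-- The part of the order `n` recurrence involving only `α` and the coefficients of order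
`0, …, n - 1`. -/
def lowerRHS (α : Fin 5 → ℂ) (u : ℕ → Fin 5 → ℂ) (n : ℕ) (i : Fin 5) : ℂ :=
  (∑ k ∈ Finset.range n, u k i * altG (u (n - 1 - k)) i) + if n = 1 then α i else 0

lemma linPart_eval (v : Fin 5 → ℂ) :
    linPart v 0 = -v 0 - v 1 + v 2 - v 3 + v 4 ∧
    linPart v 1 = 3 * v 0 - v 1 - 3 * v 2 + 3 * v 3 - 3 * v 4 ∧
    linPart v 2 = 4 * v 2 ∧
    linPart v 3 = -3 * v 0 + 3 * v 1 - 3 * v 2 - v 3 + 3 * v 4 ∧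
    linPart v 4 = v 0 - v 1 + v 2 - v 3 - v 4 := by
  refine ⟨?_, ?_, ?_, ?_, ?_⟩ <;> simp [linPart, altG, rho] <;> ring

lemma altG_sub (v w : Fin 5 → ℂ) (i : Fin 5) :
    altG (fun j => v j - w j) i = altG v i - altG w i := by
  simp only [altG]; ring

/-- The homogeneous system `n x = B x` has only the zero solution, once the free coordinate is
prescribed to be zero at each resonance. -/
lemma eq_zero_of_linPart (n : ℕ) (x : Fin 5 → ℂ) (h : ∀ i, (n : ℂ) * x i = linPart x i)
    (h0 : n = 0 → x 0 = 0) (h2 : n = 2 → x 3 = 0) (h4 : n = 4 → x 2 = 0) : ∀ i, x i = 0 := by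
  obtain ⟨e0, e1, e2, e3, e4⟩ := linPart_eval x
  have f0 := (h 0).trans e0
  have f1 := (h 1).trans e1
  have f2 := (h 2).trans e2
  have f3 := (h 3).trans e3
  have f4 := (h 4).trans e4
  have hp2 : (n : ℂ) + 2 ≠ 0 := by exact_mod_cast (by omega : n + 2 ≠ 0)
  have hp4 : (n : ℂ) + 4 ≠ 0 := by exact_mod_cast (by omega : n + 4 ≠ 0)
  have y2 : x 2 = 0 := by
    by_cases hn : n = 4
    · exact h4 hn
    · have : (n : ℂ) - 4 ≠ 0 := sub_ne_zero.2 (by exact_mod_cast hn)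
      exact (mul_eq_zero.1 (by linear_combination f2 : ((n : ℂ) - 4) * x 2 = 0)).resolve_left this
  have y3 : -x 0 + x 4 = 0 :=
    (mul_eq_zero.1 (by linear_combination f4 - f0 : ((n : ℂ) + 2) * (-x 0 + x 4) = 0)).resolve_left
      hp2
  have y4 : -3 * x 0 + x 1 - x 3 + 3 * x 4 = 0 :=
    (mul_eq_zero.1 (by linear_combination -3 * f0 + f1 - f3 + 3 * f4 :
      ((n : ℂ) + 4) * (-3 * x 0 + x 1 - x 3 + 3 * x 4) = 0)).resolve_left hp4
  have y1 : x 1 + 3 * x 2 + x 3 = 0 := by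
    by_cases hn : n = 2
    · linear_combination 2 * h2 hn + y4 - 3 * y3 + 3 * y2
    · have : (n : ℂ) - 2 ≠ 0 := sub_ne_zero.2 (by exact_mod_cast hn)
      exact (mul_eq_zero.1 (by linear_combination f1 + 3 * f2 + f3 :
        ((n : ℂ) - 2) * (x 1 + 3 * x 2 + x 3) = 0)).resolve_left this
  have y0 : x 0 + x 1 + x 2 + x 3 + x 4 = 0 := by
    by_cases hn : n = 0
    · linear_combination 2 * h0 hn + y1 - 2 * y2 + y3
    · have : (n : ℂ) ≠ 0 := by exact_mod_cast hn
      exact (mul_eq_zero.1 (by linear_combination f0 + f1 + f2 + f3 + f4 :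
        (n : ℂ) * (x 0 + x 1 + x 2 + x 3 + x 4) = 0)).resolve_left this
  have a0 : x 0 = 0 := by linear_combination y0 / 2 - y1 / 2 + y2 - y3 / 2
  have a1 : x 1 = 0 := by linear_combination y1 / 2 - 3 / 2 * y2 - 3 / 2 * y3 + y4 / 2
  have a3 : x 3 = 0 := by linear_combination y1 / 2 - 3 / 2 * y2 + 3 / 2 * y3 - y4 / 2
  have a4 : x 4 = 0 := by linear_combination y0 / 2 - y1 / 2 + y2 + y3 / 2
  intro i
  fin_cases i
  exacts [a0, a1, y2, a3, a4]

/-! ### Reduction of the Laurent recurrence to the linear recursion -/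

lemma sum_Icc_neg_one (f : ℤ → ℂ) (n : ℕ) :
    ∑ k ∈ Finset.Icc (-1 : ℤ) n, f k = f (-1) + f n + ∑ k ∈ Finset.range n, f k := by
  induction n with
  | zero =>
    have : Finset.Icc (-1 : ℤ) ((0 : ℕ) : ℤ) = {-1, 0} := by ext; simp; omega
    rw [this]; simp
  | succ n ih =>
    have : Finset.Icc (-1 : ℤ) ((n + 1 : ℕ) : ℤ) =
        insert ((n + 1 : ℕ) : ℤ) (Finset.Icc (-1 : ℤ) n) := by ext; simp; omega
    rw [this, Finset.sum_insert (by simp), ih, Finset.sum_range_succ]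
    ring

/-- With residue vector `rho`, the sum in the recurrence at order `n ≥ 0` splits into the linear
part and the lower-order terms. -/
lemma conv_split (α : Fin 5 → ℂ) (c : Fin 5 → ℤ → ℂ) (hres : ∀ i, c i (-1) = rho i) (n : ℕ)
    (i : Fin 5) :
    (∑ k ∈ Finset.Icc (-1 : ℤ) ((n : ℤ) + 1 - 1),
        c i k * (c (i + 1) (n - k - 1) - c (i + 2) (n - k - 1) +
          c (i + 3) (n - k - 1) - c (i + 4) (n - k - 1))) +
      (if (n : ℤ) = 1 then α i else 0) =
    linPart (fun j => c j n) i + lowerRHS α (fun m j => c j m) n i := by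
  rw [add_sub_cancel_right, sum_Icc_neg_one, lowerRHS, linPart]
  have hs : ∑ k ∈ Finset.range n,
      c i k * (c (i + 1) (n - k - 1) - c (i + 2) (n - k - 1) +
          c (i + 3) (n - k - 1) - c (i + 4) (n - k - 1)) =
      ∑ k ∈ Finset.range n, c i k * altG (fun j => c j ((n - 1 - k : ℕ) : ℤ)) i := by
    refine Finset.sum_congr rfl fun k hk => ?_
    have hk := Finset.mem_range.1 hk
    rw [show ((n - 1 - k : ℕ) : ℤ) = n - k - 1 by omega, altG]
  rw [hs]
  have e1 : (n : ℤ) - -1 - 1 = n := by ring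
  have e2 : (n : ℤ) - n - 1 = -1 := by ring
  simp only [e1, e2, hres, altG, Nat.cast_eq_one]
  ring

lemma rec_of_isFormal {α : Fin 5 → ℂ} {c : Fin 5 → ℤ → ℂ} (hc : IsFormalMeromSolA4 α 1 c)
    (hres : ∀ i, c i (-1) = rho i) (n : ℕ) (i : Fin 5) :
    (n : ℂ) * c i n = linPart (fun j => c j n) i + lowerRHS α (fun m j => c j m) n i := by
  rw [← conv_split α c hres n i, ← hc.2.2.2 i n, Int.cast_natCast]

/-- The Laurent coefficients with residue vector `rho` and non-negative part `u`. -/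
def extend (u : ℕ → Fin 5 → ℂ) (i : Fin 5) (n : ℤ) : ℂ :=
  if 0 ≤ n then u n.toNat i else if n = -1 then rho i else 0

lemma extend_nat (u : ℕ → Fin 5 → ℂ) (i : Fin 5) (n : ℕ) : extend u i n = u n i := by
  simp [extend]

lemma extend_neg_one (u : ℕ → Fin 5 → ℂ) (i : Fin 5) : extend u i (-1) = rho i := by
  simp [extend]

lemma extend_lt (u : ℕ → Fin 5 → ℂ) (i : Fin 5) (n : ℤ) (hn : n < -1) : extend u i n = 0 := by
  rw [extend, if_neg (by omega), if_neg (by omega)]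

lemma isFormal_extend {α : Fin 5 → ℂ} {u : ℕ → Fin 5 → ℂ}
    (hu : ∀ (n : ℕ) i, (n : ℂ) * u n i = linPart (u n) i + lowerRHS α u n i) :
    IsFormalMeromSolA4 α 1 (extend u) := by
  refine ⟨le_rfl, ⟨0, by simp [extend_neg_one, rho]⟩, extend_lt u, fun i n => ?_⟩
  rcases lt_or_ge n 0 with hn | hn
  · rcases eq_or_ne n (-1) with rfl | hne
    ·
      -- At order `-1` the recurrence says that `rho` is an admissible residue vector.
      simp only [Int.reduceNeg, Int.reduceAdd, Finset.Icc_self,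
        Finset.sum_singleton, sub_self, zero_sub, extend_neg_one]
      fin_cases i <;> simp [rho] <;> norm_num
    · rw [extend_lt u i n (by omega), Finset.Icc_eq_empty (by omega), if_neg (by omega)]
      simp
  · lift n to ℕ using hn
    rw [conv_split α (extend u) (extend_neg_one u) n i]
    simp only [extend_nat, Int.cast_natCast]
    exact hu n i

/-! ### Construction of a solution -/

/-- The solution `x` of `(n - B) x = R` (for `R` compatible with the resonances), computed in the
eigenbasis of `B`. At the resonances
`n = 0, 2, 4` the undetermined eigencoordinate is chosen so that `x⁰ = a`, `x³ = b`, `x² = d`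
respectively. -/
noncomputable def step (a b d : ℂ) (n : ℕ) (R : Fin 5 → ℂ) : Fin 5 → ℂ :=
  let y2 : ℂ := if n = 4 then d else R 2 / (n - 4)
  let y3 : ℂ := (-R 0 + R 4) / (n + 2)
  let y4 : ℂ := (-3 * R 0 + R 1 - R 3 + 3 * R 4) / (n + 4)
  let y1 : ℂ := if n = 2 then 2 * b + 3 * y2 - 3 * y3 + y4 else (R 1 + 3 * R 2 + R 3) / (n - 2)
  let y0 : ℂ := if n = 0 then 2 * a + y1 - 2 * y2 + y3
    else (R 0 + R 1 + R 2 + R 3 + R 4) / n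
  ![y0 / 2 - y1 / 2 + y2 - y3 / 2, y1 / 2 - 3 / 2 * y2 - 3 / 2 * y3 + y4 / 2, y2,
    y1 / 2 - 3 / 2 * y2 + 3 / 2 * y3 - y4 / 2, y0 / 2 - y1 / 2 + y2 + y3 / 2]

lemma step_spec (a b d : ℂ) (n : ℕ) (R : Fin 5 → ℂ)
    (h0 : n = 0 → R 0 + R 1 + R 2 + R 3 + R 4 = 0) (h2 : n = 2 → R 1 + 3 * R 2 + R 3 = 0)
    (h4 : n = 4 → R 2 = 0) (i : Fin 5) :
    (n : ℂ) * step a b d n R i = linPart (step a b d n R) i + R i := by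
  have hp2 : (n : ℂ) + 2 ≠ 0 := by exact_mod_cast (by omega : n + 2 ≠ 0)
  have hp4 : (n : ℂ) + 4 ≠ 0 := by exact_mod_cast (by omega : n + 4 ≠ 0)
  obtain ⟨y0, y1, y2, y3, y4, hx, e0, e1, e2, e3, e4⟩ : ∃ y0 y1 y2 y3 y4 : ℂ,
      step a b d n R =
        ![y0 / 2 - y1 / 2 + y2 - y3 / 2, y1 / 2 - 3 / 2 * y2 - 3 / 2 * y3 + y4 / 2, y2,
          y1 / 2 - 3 / 2 * y2 + 3 / 2 * y3 - y4 / 2, y0 / 2 - y1 / 2 + y2 + y3 / 2] ∧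
      n * y0 = R 0 + R 1 + R 2 + R 3 + R 4 ∧ (n - 2) * y1 = R 1 + 3 * R 2 + R 3 ∧
      (n - 4) * y2 = R 2 ∧ (n + 2) * y3 = -R 0 + R 4 ∧
      (n + 4) * y4 = -3 * R 0 + R 1 - R 3 + 3 * R 4 := by
    refine ⟨_, _, _, _, _, rfl, ?_, ?_, ?_, ?_, ?_⟩
    · by_cases hn : n = 0
      · rw [h0 hn]; simp [hn]
      · have : (n : ℂ) ≠ 0 := by exact_mod_cast hn
        rw [if_neg hn]; field_simp
    · by_cases hn : n = 2
      · rw [h2 hn]; simp [hn]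
      · have : (n : ℂ) - 2 ≠ 0 := sub_ne_zero.2 (by exact_mod_cast hn)
        rw [if_neg hn]; field_simp
    · by_cases hn : n = 4
      · rw [h4 hn]; simp [hn]
      · have : (n : ℂ) - 4 ≠ 0 := sub_ne_zero.2 (by exact_mod_cast hn)
        rw [if_neg hn]; field_simp
    · field_simp
    · field_simp
  obtain ⟨f0, f1, f2, f3, f4⟩ := linPart_eval (step a b d n R)
  have g0 : step a b d n R 0 = y0 / 2 - y1 / 2 + y2 - y3 / 2 := by rw [hx]; rfl
  have g1 : step a b d n R 1 = y1 / 2 - 3 / 2 * y2 - 3 / 2 * y3 + y4 / 2 := by rw [hx]; rfl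
  have g2 : step a b d n R 2 = y2 := by rw [hx]; rfl
  have g3 : step a b d n R 3 = y1 / 2 - 3 / 2 * y2 + 3 / 2 * y3 - y4 / 2 := by rw [hx]; rfl
  have g4 : step a b d n R 4 = y0 / 2 - y1 / 2 + y2 + y3 / 2 := by rw [hx]; rfl
  rw [g0, g1, g2, g3, g4] at f0 f1 f3 f4
  rw [g2] at f2
  have r0 : (n : ℂ) * step a b d n R 0 = linPart (step a b d n R) 0 + R 0 := by
    rw [f0, g0]; linear_combination e0 / 2 - e1 / 2 + e2 - e3 / 2
  have r1 : (n : ℂ) * step a b d n R 1 = linPart (step a b d n R) 1 + R 1 := by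
    rw [f1, g1]; linear_combination e1 / 2 - 3 / 2 * e2 - 3 / 2 * e3 + e4 / 2
  have r2 : (n : ℂ) * step a b d n R 2 = linPart (step a b d n R) 2 + R 2 := by
    rw [f2, g2]; linear_combination e2
  have r3 : (n : ℂ) * step a b d n R 3 = linPart (step a b d n R) 3 + R 3 := by
    rw [f3, g3]; linear_combination e1 / 2 - 3 / 2 * e2 + 3 / 2 * e3 - e4 / 2
  have r4 : (n : ℂ) * step a b d n R 4 = linPart (step a b d n R) 4 + R 4 := by
    rw [f4, g4]; linear_combination e0 / 2 - e1 / 2 + e2 + e3 / 2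
  fin_cases i
  exacts [r0, r1, r2, r3, r4]

lemma step_zero (a b d : ℂ) (R : Fin 5 → ℂ) : step a b d 0 R 0 = a := by
  simp [step]; ring

lemma step_two (a b d : ℂ) (R : Fin 5 → ℂ) : step a b d 2 R 3 = b := by
  simp [step]; ring

lemma step_four (a b d : ℂ) (R : Fin 5 → ℂ) : step a b d 4 R 2 = d := by
  simp [step]

/-- The non-negative part of the solution with parameters `c₀⁰ = a`, `c₂³ = b`, `c₄² = d`. -/
noncomputable def sol (α : Fin 5 → ℂ) (a b d : ℂ) (n : ℕ) : Fin 5 → ℂ :=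
  step a b d n fun i =>
    (∑ k : Fin n, sol α a b d k i * altG (sol α a b d (n - 1 - k)) i) + if n = 1 then α i else 0
termination_by n
decreasing_by all_goals omega

lemma sol_eq (α : Fin 5 → ℂ) (a b d : ℂ) (n : ℕ) :
    sol α a b d n = step a b d n (lowerRHS α (sol α a b d) n) := by
  rw [sol]
  congr 1
  funext i
  rw [lowerRHS, Finset.sum_range fun k => sol α a b d k i * altG (sol α a b d (n - 1 - k)) i]

/-! ### Low orders and compatibility at the resonances -/

lemma low_zero {α : Fin 5 → ℂ} {u : ℕ → Fin 5 → ℂ}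
    (h : ∀ i, ((0 : ℕ) : ℂ) * u 0 i = linPart (u 0) i + lowerRHS α u 0 i) :
    u 0 1 = 0 ∧ u 0 2 = 0 ∧ u 0 3 = 0 ∧ u 0 4 = u 0 0 := by
  obtain ⟨e0, e1, e2, e3, e4⟩ := linPart_eval (u 0)
  have f0 := h 0
  have f1 := h 1
  have f2 := h 2
  have f3 := h 3
  have f4 := h 4
  simp only [e0, e1, e2, e3, e4, lowerRHS] at f0 f1 f2 f3 f4
  simp at f0 f1 f2 f3 f4
  refine ⟨?_, f2, ?_, ?_⟩
  · linear_combination -(f1 + f3) / 4 + 3 / 2 * f2 - 3 / 4 * (f4 - f0) + (-3 * f0 + f1 - f3 + 3 * f4) / 8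
  · linear_combination -(f1 + f3) / 4 + 3 / 2 * f2 + 3 / 4 * (f4 - f0) -
      (-3 * f0 + f1 - f3 + 3 * f4) / 8
  · linear_combination (f4 - f0) / 2

lemma low_one {α : Fin 5 → ℂ} {u : ℕ → Fin 5 → ℂ}
    (h : ((1 : ℕ) : ℂ) * u 1 2 = linPart (u 1) 2 + lowerRHS α u 1 2) (h0 : u 0 2 = 0) :
    u 1 2 = -α 2 / 3 := by
  rw [(linPart_eval (u 1)).2.2.1] at h
  simp [lowerRHS, h0] at h
  linear_combination -h / 3

/-- Since `u 0 = (a, 0, 0, 0, a)`, the middle components of the order `2` right-hand side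
vanish. -/
lemma lowerRHS_two {α : Fin 5 → ℂ} {u : ℕ → Fin 5 → ℂ}
    (h0 : u 0 1 = 0 ∧ u 0 2 = 0 ∧ u 0 3 = 0 ∧ u 0 4 = u 0 0) :
    lowerRHS α u 2 1 = 0 ∧ lowerRHS α u 2 2 = 0 ∧ lowerRHS α u 2 3 = 0 := by
  obtain ⟨z1, z2, z3, z4⟩ := h0
  refine ⟨?_, ?_, ?_⟩ <;> simp [lowerRHS, Finset.sum_range_succ, altG, z1, z2, z3, z4]

lemma low_two {α : Fin 5 → ℂ} {u : ℕ → Fin 5 → ℂ}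
    (h0 : u 0 1 = 0 ∧ u 0 2 = 0 ∧ u 0 3 = 0 ∧ u 0 4 = u 0 0)
    (h : ∀ i, ((2 : ℕ) : ℂ) * u 2 i = linPart (u 2) i + lowerRHS α u 2 i) :
    u 2 2 = 0 ∧ altG (u 2) 2 = 0 := by
  obtain ⟨r1, r2, r3⟩ := lowerRHS_two (α := α) h0
  obtain ⟨e0, e1, e2, e3, e4⟩ := linPart_eval (u 2)
  have f0 := h 0
  have f1 := h 1
  have f2 := h 2
  have f3 := h 3
  have f4 := h 4
  rw [e0] at f0
  rw [e1, r1] at f1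
  rw [e2, r2] at f2
  rw [e3, r3] at f3
  rw [e4] at f4
  push_cast at f0 f1 f2 f3 f4
  refine ⟨by linear_combination -f2 / 2, ?_⟩
  simp only [altG, Fin.reduceAdd]
  -- With `y₃ = -x⁰ + x⁴` and `y₄ = -3x⁰ + x¹ - x³ + 3x⁴` for `x = u 2` the claim reads
  -- `2 y₃ = y₄`, while the recursion gives `4 y₃ = R⁴ - R⁰` and `6 y₄ = 3 (R⁴ - R⁰)`.
  linear_combination (f4 - f0) / 2 - (-3 * f0 + f1 - f3 + 3 * f4) / 6

lemma lowerRHS_four {α : Fin 5 → ℂ} {u : ℕ → Fin 5 → ℂ}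
    (h0 : u 0 1 = 0 ∧ u 0 2 = 0 ∧ u 0 3 = 0 ∧ u 0 4 = u 0 0)
    (h2 : u 2 2 = 0 ∧ altG (u 2) 2 = 0) : lowerRHS α u 4 2 = 0 := by
  have hG : altG (u 0) 2 = 0 := by simp [altG, h0]
  simp [lowerRHS, Finset.sum_range_succ, h0.2.1, h2.1, h2.2, hG]

lemma sol_spec (α : Fin 5 → ℂ) (a b d : ℂ) (n : ℕ) (i : Fin 5) :
    (n : ℂ) * sol α a b d n i = linPart (sol α a b d n) i + lowerRHS α (sol α a b d) n i := by
  have key (n : ℕ)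
      (h2 : n = 2 → lowerRHS α (sol α a b d) n 1 + 3 * lowerRHS α (sol α a b d) n 2 +
        lowerRHS α (sol α a b d) n 3 = 0)
      (h4 : n = 4 → lowerRHS α (sol α a b d) n 2 = 0) (i : Fin 5) :
      (n : ℂ) * sol α a b d n i =
        linPart (sol α a b d n) i + lowerRHS α (sol α a b d) n i := by
    rw [sol_eq]
    refine step_spec a b d n _ ?_ h2 h4 i
    rintro rfl
    simp [lowerRHS]
  have z0 := low_zero (key 0 (by simp) (by simp))
  have r2 := lowerRHS_two (α := α) z0
  have z2 := low_two z0 (key 2 (fun _ => by rw [r2.1, r2.2.1, r2.2.2]; simp) (by simp))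
  refine key n ?_ ?_ i
  · rintro rfl
    rw [r2.1, r2.2.1, r2.2.2]
    simp
  · rintro rfl
    exact lowerRHS_four z0 z2

/-- A solution of the recursion is determined by its three resonance parameters. -/
lemma rec_unique {α : Fin 5 → ℂ} {u v : ℕ → Fin 5 → ℂ}
    (hu : ∀ (n : ℕ) i, (n : ℂ) * u n i = linPart (u n) i + lowerRHS α u n i)
    (hv : ∀ (n : ℕ) i, (n : ℂ) * v n i = linPart (v n) i + lowerRHS α v n i)
    (h0 : u 0 0 = v 0 0) (h2 : u 2 3 = v 2 3) (h4 : u 4 2 = v 4 2) (n : ℕ) : u n = v n := by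
  induction n using Nat.strong_induction_on with
  | _ n ih =>
    have hR (i : Fin 5) : lowerRHS α u n i = lowerRHS α v n i := by
      rw [lowerRHS, lowerRHS]
      congr 1
      refine Finset.sum_congr rfl fun k hk => ?_
      have hk := Finset.mem_range.1 hk
      rw [ih k hk, ih (n - 1 - k) (by omega)]
    funext i
    refine sub_eq_zero.1 (eq_zero_of_linPart n (fun j => u n j - v n j) (fun i => ?_) ?_ ?_ ?_ i)
    · have e1 := hu n i
      have e2 := hv n i
      rw [hR i] at e1
      simp only [linPart] at e1 e2 ⊢
      rw [altG_sub]
      linear_combination e1 - e2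
    · rintro rfl
      exact sub_eq_zero.2 h0
    · rintro rfl
      exact sub_eq_zero.2 h2
    · rintro rfl
      exact sub_eq_zero.2 h4

lemma res_eq_rho {c : Fin 5 → ℤ → ℂ} (h0 : c 0 (-1) = -1) (h1 : c 1 (-1) = -3)
    (h2 : c 2 (-1) = 0) (h3 : c 3 (-1) = 3) (h4 : c 4 (-1) = 1) (i : Fin 5) :
    c i (-1) = rho i := by
  fin_cases i
  exacts [h0, h1, h2, h3, h4]

end A4Aux

open A4Aux

/-- For each `α ∈ ℂ⁵` and `(a,b,c) ∈ ℂ³` there is a unique formal meromorphic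
solution of the `A₄⁽¹⁾` system of pole order 1 with residue vector
`(−1,−3,0,3,1)` and `c₀⁰ = a`, `c₂³ = b`, `c₄² = c`; moreover every
pole-order-1 formal solution with this residue vector satisfies
`c₀¹ = c₀² = c₀³ = 0`, `c₀⁴ = c₀⁰`, `c₁² = −α₂/3` and `c₂² = 0`. -/
theorem formalSol_type132_A4 (α : Fin 5 → ℂ) (a b cc : ℂ) :
    (∃! c : Fin 5 → ℤ → ℂ,
      IsFormalMeromSolA4 α 1 c ∧
      c 0 (-1) = -1 ∧ c 1 (-1) = -3 ∧ c 2 (-1) = 0 ∧ c 3 (-1) = 3 ∧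
        c 4 (-1) = 1 ∧
      c 0 0 = a ∧ c 3 2 = b ∧ c 2 4 = cc) ∧
    (∀ c : Fin 5 → ℤ → ℂ,
      IsFormalMeromSolA4 α 1 c →
      c 0 (-1) = -1 → c 1 (-1) = -3 → c 2 (-1) = 0 → c 3 (-1) = 3 →
        c 4 (-1) = 1 →
      c 1 0 = 0 ∧ c 2 0 = 0 ∧ c 3 0 = 0 ∧ c 4 0 = c 0 0 ∧
        c 2 1 = -α 2 / 3 ∧ c 2 2 = 0) := by
  refine ⟨⟨extend (sol α a b cc), ⟨isFormal_extend (sol_spec α a b cc), ?_⟩, ?_⟩, ?_⟩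
  · simp only [extend_neg_one]
    refine ⟨rfl, rfl, rfl, rfl, rfl, ?_, ?_, ?_⟩
    · rw [← Nat.cast_zero, extend_nat, sol_eq, step_zero]
    · rw [← Nat.cast_two, extend_nat, sol_eq, step_two]
    · exact (extend_nat (sol α a b cc) 2 4).trans (by rw [sol_eq, step_four])
  · rintro c ⟨hc, r0, r1, r2, r3, r4, p0, p2, p4⟩
    have hres := res_eq_rho r0 r1 r2 r3 r4
    have key := rec_unique (u := fun n j => c j n) (v := sol α a b cc) (rec_of_isFormal hc hres)
      (sol_spec α a b cc) (by rw [sol_eq, step_zero]; exact p0)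
      (by rw [sol_eq, step_two]; exact p2) (by rw [sol_eq, step_four]; exact p4)
    funext i n
    rcases lt_or_ge n 0 with hn | hn
    · rcases eq_or_ne n (-1) with rfl | hne
      · rw [hres, extend_neg_one]
      · rw [extend_lt _ _ _ (by omega), hc.2.2.1 i n (by omega)]
    · lift n to ℕ using hn
      rw [extend_nat]
      exact congrFun (key n) i
  · intro c hc r0 r1 r2 r3 r4
    have h := rec_of_isFormal hc (res_eq_rho r0 r1 r2 r3 r4)
    have z0 := low_zero (u := fun n j => c j n) (h 0)
    have z1 := low_one (u := fun n j => c j n) (h 1 2) z0.2.1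
    have z2 := low_two (u := fun n j => c j n) z0 (h 2)
    exact ⟨z0.1, z0.2.1, z0.2.2.1, z0.2.2.2, z1, z2.1⟩
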